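/- arXiv:1712.06301 — 2 statements merged into one kernel-verified Lean document; each statement's English description precedes it below -/
import Mathlib

section
/- Linear-quadratic Gaussian matrix expectation: let W be a q×p random matrix with i.i.d. N(0,1) entries, let M be a fixed q×p real matrix, and let Θ be a symmetric q×q matrix such that I_q − 2Θ is positive definite. Then E[exp(2 tr(Mᵀ W) + tr(Θ W Wᵀ))] = det(I_q − 2Θ)^{−p/2} · exp(2 tr(Mᵀ (I_q − 2Θ)^{−1} M)). -/
open Matrix MeasureTheory ProbabilityTheory Real

noncomputable section

/-!
The Gaussian integral is evaluated by a linear change of variables. Write `1 - 2Θ = Bᵀ B`, so that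
`x ⬝ᵥ Θ *ᵥ x = (|x|² - |B x|²) / 2`: this factor replaces the standard Gaussian density at `x` by
the one at `B x`. Substituting `y = B x` costs `|det B|⁻¹ = det (1 - 2Θ) ^ (-1/2)` and leaves the
moment generating function of a standard Gaussian vector. A random `q × p` matrix `W` is such a
vector with `q * p` entries, on which `Θ` acts as `Θ ⊗ₖ 1`, and
`det ((1 - 2Θ) ⊗ₖ 1) = det (1 - 2Θ) ^ p`.
-/

open scoped Kronecker

theorem pi_withDensity_ofReal {ι : Type*} [Fintype ι] {X : ι → Type*} [∀ i, MeasurableSpace (X i)]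
    (μ : ∀ i, Measure (X i)) [∀ i, SigmaFinite (μ i)] {f : ∀ i, X i → ℝ}
    (hf : ∀ i, Integrable (f i) (μ i)) (hf₀ : ∀ i x, 0 ≤ f i x) :
    Measure.pi (fun i => (μ i).withDensity fun x => ENNReal.ofReal (f i x)) =
      (Measure.pi μ).withDensity fun x => ENNReal.ofReal (∏ i, f i (x i)) := by
  have (i : ι) : IsFiniteMeasure ((μ i).withDensity fun x => ENNReal.ofReal (f i x)) :=
    isFiniteMeasure_withDensity_ofReal (hf i).2
  refine Measure.pi_eq fun s hs => ?_
  have hint : Integrable (fun x => ∏ i, f i (x i))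
      (Measure.pi fun i => (μ i).restrict (s i)) := .fintype_prod_dep fun i => (hf i).restrict
  rw [withDensity_apply _ (.univ_pi hs), Measure.restrict_pi_pi,
    ← ofReal_integral_eq_lintegral_ofReal hint
      (.of_forall fun x => Finset.prod_nonneg fun i _ => hf₀ i (x i)),
    integral_fintype_prod_eq_prod,
    ENNReal.ofReal_prod_of_nonneg fun i _ => integral_nonneg (hf₀ i)]
  refine Finset.prod_congr rfl fun i _ => ?_
  rw [withDensity_apply _ (hs i),
    ofReal_integral_eq_lintegral_ofReal (hf i).restrict (.of_forall (hf₀ i))]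

theorem measurePreserving_curry_symm_pi_pi {m n Y : Type*} [Fintype m] [Fintype n]
    [MeasurableSpace Y] (μ : m → n → Measure Y) [∀ i j, IsProbabilityMeasure (μ i j)] :
    MeasurePreserving (MeasurableEquiv.curry m n Y).symm
      (Measure.pi fun i => Measure.pi (μ i)) (Measure.pi fun k => μ k.1 k.2) where
  measurable := MeasurableEquiv.measurable _
  map_eq := by simpa only [Measure.infinitePi_eq_pi] using Measure.infinitePi_map_curry_symm μ

section GaussianVector

variable {ι E : Type*} [Fintype ι] [NormedAddCommGroup E] [NormedSpace ℝ E]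

theorem integral_pi_gaussianReal_eq_integral_smul (f : (ι → ℝ) → E) :
    ∫ x, f x ∂(Measure.pi fun _ => gaussianReal 0 1) =
      ∫ x, ((√(2 * π))⁻¹ ^ Fintype.card ι * Real.exp (-(x ⬝ᵥ x) / 2)) • f x := by
  have hpdf (x : ι → ℝ) : ∏ i, gaussianPDFReal 0 1 (x i) =
      (√(2 * π))⁻¹ ^ Fintype.card ι * Real.exp (-(x ⬝ᵥ x) / 2) := by
    simp [gaussianPDFReal, Finset.prod_mul_distrib, ← Real.exp_sum, dotProduct, sq,
      Finset.sum_div, neg_div]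
  simp_rw [gaussianReal_of_var_ne_zero 0 one_ne_zero, gaussianPDF_def,
    pi_withDensity_ofReal (fun _ : ι => volume) (fun _ => integrable_gaussianPDFReal 0 1)
      (fun _ => gaussianPDFReal_nonneg 0 1), hpdf]
  rw [integral_withDensity_eq_integral_toReal_smul (by fun_prop) (by simp)]
  exact integral_congr_ae (.of_forall fun x =>
    congrArg (· • f x) (ENNReal.toReal_ofReal (by positivity)))

theorem integral_exp_dotProduct_pi_gaussianReal (b : ι → ℝ) :
    ∫ x, Real.exp (b ⬝ᵥ x) ∂(Measure.pi fun _ => gaussianReal 0 1) =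
      Real.exp (b ⬝ᵥ b / 2) := by
  have hmgf (t : ℝ) : ∫ y, Real.exp (t * y) ∂(gaussianReal 0 1) = Real.exp (t ^ 2 / 2) := by
    simpa [mgf] using congrFun (mgf_id_gaussianReal (μ := 0) (v := 1)) t
  simp_rw [dotProduct, Real.exp_sum,
    integral_fintype_prod_eq_prod (𝕜 := ℝ) (fun i y => Real.exp (b i * y)), hmgf, Finset.sum_div,
    Real.exp_sum, sq]

variable [DecidableEq ι]

theorem integral_comp_mulVec {B : Matrix ι ι ℝ} (hB : IsUnit B) (f : (ι → ℝ) → E) :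
    ∫ x, f (B *ᵥ x) = |B.det|⁻¹ • ∫ x, f x := by
  have hemb : MeasurableEmbedding (toLin' B) :=
    (toLin' B).continuous_on_pi.measurableEmbedding (mulVec_injective_iff_isUnit.2 hB)
  have hdet : B.det ≠ 0 := (B.isUnit_iff_isUnit_det.1 hB).ne_zero
  simp_rw [← toLin'_apply]
  rw [← hemb.integral_map, Real.map_matrix_volume_pi_eq_smul_volume_pi hdet, integral_smul_measure,
    ENNReal.toReal_ofReal (abs_nonneg _), abs_inv]

theorem integral_exp_smul_comp_mulVec_pi_gaussianReal {B : Matrix ι ι ℝ} (hB : IsUnit B)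
    (f : (ι → ℝ) → E) :
    ∫ x, Real.exp ((x ⬝ᵥ x - B *ᵥ x ⬝ᵥ B *ᵥ x) / 2) • f (B *ᵥ x)
        ∂(Measure.pi fun _ => gaussianReal 0 1) =
      |B.det|⁻¹ • ∫ x, f x ∂(Measure.pi fun _ => gaussianReal 0 1) := by
  rw [integral_pi_gaussianReal_eq_integral_smul, integral_pi_gaussianReal_eq_integral_smul,
    ← integral_comp_mulVec hB]
  refine integral_congr_ae (.of_forall fun x => ?_)
  simp only [smul_smul, mul_assoc, ← Real.exp_add]
  congr 4
  ring

open scoped MatrixOrder Matrix.Norms.L2Operator in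
theorem exists_isUnit_eq_transpose_mul_self_of_posDef {A : Matrix ι ι ℝ} (hA : A.PosDef) :
    ∃ B : Matrix ι ι ℝ, IsUnit B ∧ A = Bᵀ * B := by
  simpa [star_eq_conjTranspose] using
    CStarAlgebra.isStrictlyPositive_iff_eq_star_mul_self.1 hA.isStrictlyPositive

theorem integral_exp_linear_add_quadratic_pi_gaussianReal (b : ι → ℝ) {Θ : Matrix ι ι ℝ}
    (hΘ : (1 - (2 : ℝ) • Θ).PosDef) :
    ∫ x, Real.exp (b ⬝ᵥ x + x ⬝ᵥ Θ *ᵥ x) ∂(Measure.pi fun _ => gaussianReal 0 1) =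
      (1 - (2 : ℝ) • Θ).det ^ (-(1 : ℝ) / 2) *
        Real.exp (b ⬝ᵥ (1 - (2 : ℝ) • Θ)⁻¹ *ᵥ b / 2) := by
  obtain ⟨B, hB, hBB⟩ := exists_isUnit_eq_transpose_mul_self_of_posDef hΘ
  have hBdet : IsUnit B.det := B.isUnit_iff_isUnit_det.1 hB
  obtain ⟨c, rfl⟩ : ∃ c, Bᵀ *ᵥ c = b :=
    mulVec_surjective_iff_isUnit.2 ((isUnit_transpose B).2 hB) b
  have hlin (x : ι → ℝ) : Bᵀ *ᵥ c ⬝ᵥ x = c ⬝ᵥ B *ᵥ x := by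
    rw [mulVec_transpose, dotProduct_mulVec]
  have hquad (x : ι → ℝ) : x ⬝ᵥ Θ *ᵥ x = (x ⬝ᵥ x - B *ᵥ x ⬝ᵥ B *ᵥ x) / 2 := by
    have : B *ᵥ x ⬝ᵥ B *ᵥ x = x ⬝ᵥ x - 2 * (x ⬝ᵥ Θ *ᵥ x) := by
      rw [dotProduct_mulVec, vecMul_mulVec, ← dotProduct_mulVec, ← hBB, sub_mulVec, one_mulVec,
        smul_mulVec, dotProduct_sub, dotProduct_smul, smul_eq_mul]
    linarith
  have hnorm : Bᵀ *ᵥ c ⬝ᵥ (Bᵀ * B)⁻¹ *ᵥ (Bᵀ *ᵥ c) = c ⬝ᵥ c := by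
    rw [hlin, mulVec_mulVec, mulVec_mulVec, Matrix.mul_inv_rev, ← Matrix.mul_assoc,
      B.mul_nonsing_inv hBdet, Matrix.one_mul,
      nonsing_inv_mul _ (by rwa [det_transpose]), one_mulVec]
  have hdet : (Bᵀ * B).det ^ (-(1 : ℝ) / 2) = |B.det|⁻¹ := by
    rw [det_mul, det_transpose, ← sq, neg_div, Real.rpow_neg (sq_nonneg _), ← Real.sqrt_eq_rpow,
      Real.sqrt_sq_eq_abs]
  simp_rw [hBB, hnorm, hdet, hlin, hquad, add_comm (c ⬝ᵥ _), Real.exp_add]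
  rw [← integral_exp_dotProduct_pi_gaussianReal]
  exact integral_exp_smul_comp_mulVec_pi_gaussianReal hB fun y => Real.exp (c ⬝ᵥ y)

end GaussianVector

theorem vec_transpose_dotProduct_kronecker_one_mulVec {m n R : Type*} [Fintype m] [Fintype n]
    [DecidableEq n] [CommSemiring R] (X Y : Matrix m n R) (A : Matrix m m R) :
    vec Xᵀ ⬝ᵥ (A ⊗ₖ (1 : Matrix n n R)) *ᵥ vec Yᵀ = trace (Xᵀ * A * Y) := by
  rw [kronecker_mulVec_vec, Matrix.one_mul, ← transpose_mul, vec_dotProduct_vec, ← transpose_mul,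
    trace_transpose, trace_mul_comm, ← Matrix.mul_assoc]

theorem one_sub_smul_kronecker_one {m n R : Type*} [DecidableEq m] [DecidableEq n] [CommRing R]
    (c : R) (A : Matrix m m R) :
    1 - c • (A ⊗ₖ (1 : Matrix n n R)) = (1 - c • A) ⊗ₖ (1 : Matrix n n R) := by
  rw [sub_eq_iff_eq_add, ← smul_kronecker, ← add_kronecker, sub_add_cancel, one_kronecker_one]

theorem stmt_14_general {m n : Type*} [Fintype m] [Fintype n] [DecidableEq m]
    (M : Matrix m n ℝ) {Θ : Matrix m m ℝ} (hpos : (1 - (2 : ℝ) • Θ).PosDef) :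
    ∫ w : m → n → ℝ,
        Real.exp (2 * trace (Mᵀ * of w) + trace (Θ * (of w * (of w)ᵀ)))
        ∂(Measure.pi fun _ => Measure.pi fun _ => gaussianReal 0 1) =
      (1 - (2 : ℝ) • Θ).det ^ (-(Fintype.card n : ℝ) / 2) *
        Real.exp (2 * trace (Mᵀ * (1 - (2 : ℝ) • Θ)⁻¹ * M)) := by
  classical
  let Θ' : Matrix (m × n) (m × n) ℝ := Θ ⊗ₖ (1 : Matrix n n ℝ)
  have hsub : 1 - (2 : ℝ) • Θ' = (1 - (2 : ℝ) • Θ) ⊗ₖ (1 : Matrix n n ℝ) :=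
    one_sub_smul_kronecker_one 2 Θ
  have hlin (W : Matrix m n ℝ) : vec Mᵀ ⬝ᵥ vec Wᵀ = trace (Mᵀ * W) := by
    simpa using vec_transpose_dotProduct_kronecker_one_mulVec M W 1
  have hquad (W : Matrix m n ℝ) : vec Wᵀ ⬝ᵥ Θ' *ᵥ vec Wᵀ = trace (Θ * (W * Wᵀ)) := by
    rw [vec_transpose_dotProduct_kronecker_one_mulVec, Matrix.mul_assoc, trace_mul_comm,
      Matrix.mul_assoc]
  calc
    _ = ∫ w : m → n → ℝ, Real.exp ((2 : ℝ) • vec Mᵀ ⬝ᵥ vec (of w)ᵀ +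
          vec (of w)ᵀ ⬝ᵥ Θ' *ᵥ vec (of w)ᵀ)
          ∂(Measure.pi fun _ => Measure.pi fun _ => gaussianReal 0 1) := by
      simp_rw [smul_dotProduct, hlin, hquad, smul_eq_mul]
    -- `vec (of w)ᵀ` is definitionally the uncurried `w`; `vec (of w)` would list it by columns.
    _ = ∫ x, Real.exp ((2 : ℝ) • vec Mᵀ ⬝ᵥ x + x ⬝ᵥ Θ' *ᵥ x)
          ∂(Measure.pi fun _ => gaussianReal 0 1) :=
      (measurePreserving_curry_symm_pi_pi fun _ _ => gaussianReal 0 1).integral_comp'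
        fun x => Real.exp ((2 : ℝ) • vec Mᵀ ⬝ᵥ x + x ⬝ᵥ Θ' *ᵥ x)
    _ = _ := by
      rw [integral_exp_linear_add_quadratic_pi_gaussianReal _ (hsub ▸ hpos.kronecker PosDef.one),
        hsub, inv_kronecker, inv_one, det_kronecker, det_one, one_pow, mul_one,
        ← Real.rpow_natCast_mul hpos.det_pos.le, mulVec_smul, smul_dotProduct, dotProduct_smul,
        vec_transpose_dotProduct_kronecker_one_mulVec, smul_eq_mul, smul_eq_mul]
      congr 2 <;> ring

theorem stmt_14 (q p : ℕ) (M : Matrix (Fin q) (Fin p) ℝ)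
    (Θ : Matrix (Fin q) (Fin q) ℝ) (hΘ : Θ.IsSymm)
    (hpos : ((1 : Matrix (Fin q) (Fin q) ℝ) - (2 : ℝ) • Θ).PosDef) :
    ∫ w : Fin q → Fin p → ℝ,
        Real.exp (2 * Matrix.trace (Mᵀ * Matrix.of w) +
          Matrix.trace (Θ * (Matrix.of w * (Matrix.of w)ᵀ)))
        ∂(Measure.pi fun _ : Fin q => Measure.pi fun _ : Fin p => gaussianReal 0 1) =
      ((1 : Matrix (Fin q) (Fin q) ℝ) - (2 : ℝ) • Θ).det ^ (-(p : ℝ) / 2) *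
        Real.exp (2 * Matrix.trace (Mᵀ * ((1 : Matrix (Fin q) (Fin q) ℝ) - (2 : ℝ) • Θ)⁻¹ * M)) := by
  simpa using stmt_14_general M hpos
end
end

section
/- Main theorem (Gaussian representation of Riesz distributions, rank-2 block case): let p, q ≥ 1, let s₁ ≥ p and s₂ ≥ s₁ be integers, and form the (p+q)×(s₂) random matrix U = [[U₁, 0],[U₂₁, U₀]], where U₁ (p×s₁), U₂₁ (q×s₁), U₀ (q×(s₂−s₁)) have independent i.i.d. N(0,1) entries. Then X = U Uᵀ has Laplace transform E[exp(tr(θX))] = Δ_s((I/2 − θ)^{−1}) / Δ_s(2I) for symmetric θ with I/2 − θ positive definite, where s = (s₁/2,…,s₁/2, s₂/2,…,s₂/2) ∈ ℝ^{p+q} (first p entries s₁/2, last q entries s₂/2); i.e., X has the Riesz distribution R(s, I/2). -/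
open Matrix

noncomputable section

/-- The determinant of the leading principal `k × k` submatrix of `x`. -/
def lpm {r : ℕ} (x : Matrix (Fin r) (Fin r) ℝ) (k : ℕ) (h : k ≤ r) : ℝ :=
  (x.submatrix (fun i : Fin k => Fin.castLE h i) (fun i : Fin k => Fin.castLE h i)).det

/-- The generalized power `Δ_s(x) = ∏ₖ Δₖ(x)^(sₖ - sₖ₊₁)` (convention `s_{r+1} = 0`). -/
def genPow {r : ℕ} (s : Fin r → ℝ) (x : Matrix (Fin r) (Fin r) ℝ) : ℝ :=
  ∏ k : Fin r, (lpm x (k.val + 1) k.isLt) ^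
    (s k - if h : k.val + 1 < r then s ⟨k.val + 1, h⟩ else 0)
open MeasureTheory ProbabilityTheory

/-- The Gaussian sample matrix with missing data replaced by 0:
`U = [[U₁, 0], [U₂₁, U₀]]` where the top-right `p × (s₂ − s₁)` block is zero and all
other entries are the (i.i.d. standard normal) entries of `w`. -/
def missingDataMatrix (p q s₁ s₂ : ℕ) (w : Fin (p + q) → Fin s₂ → ℝ) :
    Matrix (Fin (p + q)) (Fin s₂) ℝ :=
  Matrix.of fun i j => if i.val < p ∧ s₁ ≤ j.val then 0 else w i j

/-!
The columns of `U` are independent, and each is a standard Gaussian vector restricted to a set of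
rows, so `E[exp (tr (θ U Uᵀ))]` is the product over the columns of `det (B_S)^(-1/2)`, where
`B = 1 - 2θ` and `S` is the set of rows which the column meets. When `S` is a trailing interval,
Jacobi's complementary minor identity makes this factor the generalized power of `B⁻¹` whose
exponent is half the indicator of `S`. As `Δ_{s+t} = Δ_s Δ_t`, the product over the columns is
`Δ_s(B⁻¹)`, with `s_i` half the number of entries in row `i`.
-/

section GaussianQuadraticForm

variable {ι : Type*} [Fintype ι]

/-- For `1 / 2 ≤ t` the integral diverges and both sides are the junk value `0`. -/
theorem integral_exp_mul_sq_gaussianReal (t : ℝ) :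
    ∫ x, Real.exp (t * x ^ 2) ∂gaussianReal 0 1 = (√(1 - 2 * t))⁻¹ := by
  have hdensity (x : ℝ) : gaussianPDFReal 0 1 x • Real.exp (t * x ^ 2) =
      (√(2 * Real.pi))⁻¹ * Real.exp (-(1 / 2 - t) * x ^ 2) := by
    simp only [gaussianPDFReal, smul_eq_mul, NNReal.coe_one, mul_one, sub_zero]
    rw [mul_assoc, ← Real.exp_add]
    ring_nf
  simp_rw [integral_gaussianReal_eq_integral_smul one_ne_zero, hdensity]
  rw [integral_const_mul, integral_gaussian, ← Real.sqrt_inv, ← Real.sqrt_inv,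
    ← Real.sqrt_mul (by positivity)]
  congr 1
  field_simp

theorem dotProduct_mulVec_sum_smul_of_eigenbasis (b : OrthonormalBasis ι ℝ (EuclideanSpace ℝ ι))
    {M : Matrix ι ι ℝ} {c : ι → ℝ} (hb : ∀ i, M *ᵥ (b i).ofLp = c i • (b i).ofLp) (x : ι → ℝ) :
    (∑ i, x i • b i).ofLp ⬝ᵥ M *ᵥ (∑ i, x i • b i).ofLp = ∑ i, c i * x i ^ 2 := by
  have hmul : M *ᵥ (∑ i, x i • b i).ofLp = (∑ i, (c i * x i) • b i).ofLp := by
    simp only [WithLp.ofLp_sum, WithLp.ofLp_smul, mulVec_sum, mulVec_smul, hb, smul_smul, mul_comm]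
  have hinner (u v : EuclideanSpace ℝ ι) : u.ofLp ⬝ᵥ v.ofLp = inner ℝ u v := by
    rw [EuclideanSpace.inner_eq_star_dotProduct, dotProduct_comm, star_trivial]
  rw [hmul, hinner, b.orthonormal.inner_sum]
  refine Finset.sum_congr rfl fun i _ => ?_
  rw [conj_trivial]
  ring

theorem integral_exp_dotProduct_mulVec_gaussian [DecidableEq ι] {M : Matrix ι ι ℝ}
    (hM : (1 - (2 : ℝ) • M).PosDef) :
    ∫ y, Real.exp (y ⬝ᵥ M *ᵥ y) ∂(Measure.pi fun _ : ι => gaussianReal 0 1) =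
      (√(1 - (2 : ℝ) • M).det)⁻¹ := by
  set b := hM.isHermitian.eigenvectorBasis
  set μ := hM.isHermitian.eigenvalues
  have hb (i : ι) : M *ᵥ (b i).ofLp = ((1 - μ i) / 2) • (b i).ofLp := by
    have h := hM.isHermitian.mulVec_eigenvectorBasis i
    rw [sub_mulVec, one_mulVec, smul_mulVec, sub_eq_iff_eq_add, ← sub_eq_iff_eq_add'] at h
    rw [div_eq_inv_mul, mul_smul, sub_smul, one_smul, h, inv_smul_smul₀ two_ne_zero]
  set F : EuclideanSpace ℝ ι → ℝ := fun z => Real.exp (z.ofLp ⬝ᵥ M *ᵥ z.ofLp) with hF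
  have hFcont : Continuous F := by fun_prop
  calc
    _ = ∫ z, F z ∂stdGaussian (EuclideanSpace ℝ ι) := by
      rw [← map_pi_eq_stdGaussian, integral_map (by fun_prop) hFcont.aestronglyMeasurable]
    _ = ∫ x, F (∑ i, x i • b i) ∂(Measure.pi fun _ : ι => gaussianReal 0 1) := by
      rw [stdGaussian_eq_map_pi_orthonormalBasis b,
        integral_map (Continuous.aemeasurable (by fun_prop)) hFcont.aestronglyMeasurable]
    _ = ∏ i, ∫ t, Real.exp ((1 - μ i) / 2 * t ^ 2) ∂gaussianReal 0 1 := by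
      simp_rw [hF, dotProduct_mulVec_sum_smul_of_eigenbasis b hb, Real.exp_sum]
      exact integral_fintype_prod_eq_prod fun i t => Real.exp ((1 - μ i) / 2 * t ^ 2)
    _ = ∏ i, (√(μ i))⁻¹ := by
      simp_rw [integral_exp_mul_sq_gaussianReal, mul_div_cancel₀ _ (two_ne_zero' ℝ), sub_sub_cancel]
    _ = (√(1 - (2 : ℝ) • M).det)⁻¹ := by
      rw [Finset.prod_inv_distrib, ← Real.sqrt_prod _ fun i _ => (hM.eigenvalues_pos i).le,
        hM.isHermitian.det_eq_prod_eigenvalues]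
      rfl

end GaussianQuadraticForm

theorem toSquareBlockProp_one_sub_smul {m R : Type*} [DecidableEq m] [Ring R] (M : Matrix m m R)
    (c : R) (P : m → Prop) :
    (1 - c • M).toSquareBlockProp P = 1 - c • M.toSquareBlockProp P := by
  ext i j
  simp [toSquareBlockProp, toBlock, Matrix.one_apply, Subtype.ext_iff]

theorem posDef_toSquareBlockProp {m R : Type*} [Ring R] [PartialOrder R] [StarRing R]
    {A : Matrix m m R} (hA : A.PosDef) (P : m → Prop) : (A.toSquareBlockProp P).PosDef :=
  hA.submatrix Subtype.val_injective

section Mask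

variable {ι κ : Type*} [Fintype ι] [Fintype κ]

/-- The matrix `w` with missing data: the entries outside the pattern `P` are replaced by `0`. -/
def maskedMatrix (P : ι → κ → Prop) [∀ i j, Decidable (P i j)] (w : ι → κ → ℝ) : Matrix ι κ ℝ :=
  Matrix.of fun i j => if P i j then w i j else 0

theorem dotProduct_ite_mulVec_ite {R : Type*} [NonUnitalNonAssocSemiring R] (M : Matrix ι ι R)
    (P : ι → Prop) [DecidablePred P] (y : ι → R) :
    (fun i => if P i then y i else 0) ⬝ᵥ M *ᵥ (fun i => if P i then y i else 0) =
      (fun i : {i // P i} => y i) ⬝ᵥ M.toSquareBlockProp P *ᵥ fun i => y i := by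
  have hsum (f : ι → R) : (∑ i, if P i then f i else 0) = ∑ i : {i // P i}, f i := by
    rw [← Finset.sum_filter]
    exact Finset.sum_subtype _ (by simp only [Finset.mem_filter_univ, implies_true]) f
  simp only [dotProduct, mulVec, toSquareBlockProp, toBlock_apply, mul_ite, ite_mul, mul_zero,
    zero_mul, hsum]

theorem measurePreserving_restrict_subtype_pi {X : ι → Type*} [∀ i, MeasurableSpace (X i)]
    (μ : ∀ i, Measure (X i)) [∀ i, IsProbabilityMeasure (μ i)] (P : ι → Prop) [DecidablePred P] :
    MeasurePreserving (fun (y : ∀ i, X i) (i : {i // P i}) => y i)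
      (Measure.pi μ) (Measure.pi fun i => μ i) :=
  measurePreserving_fst.comp (measurePreserving_piEquivPiSubtypeProd μ P)

theorem integral_exp_dotProduct_ite_mulVec_ite_gaussian [DecidableEq ι] {M : Matrix ι ι ℝ}
    (hM : (1 - (2 : ℝ) • M).PosDef) (P : ι → Prop) [DecidablePred P] :
    ∫ y, Real.exp ((fun i => if P i then y i else 0) ⬝ᵥ M *ᵥ fun i => if P i then y i else 0)
        ∂(Measure.pi fun _ : ι => gaussianReal 0 1) =
      (√((1 - (2 : ℝ) • M).toSquareBlockProp P).det)⁻¹ := by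
  have hrestrict := measurePreserving_restrict_subtype_pi (fun _ => gaussianReal 0 1) P
  have hcont : Continuous fun z : {i // P i} → ℝ =>
      Real.exp (z ⬝ᵥ M.toSquareBlockProp P *ᵥ z) := by fun_prop
  have hblock := posDef_toSquareBlockProp hM P
  rw [toSquareBlockProp_one_sub_smul] at hblock ⊢
  simp_rw [dotProduct_ite_mulVec_ite]
  rw [← integral_exp_dotProduct_mulVec_gaussian hblock, ← hrestrict.map_eq,
    integral_map hrestrict.measurable.aemeasurable hcont.aestronglyMeasurable]

theorem measurePreserving_curry_pi {X : Type*} [MeasurableSpace X] (μ : ι → κ → Measure X)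
    [∀ i j, IsProbabilityMeasure (μ i j)] :
    MeasurePreserving (MeasurableEquiv.curry ι κ X) (Measure.pi fun ij => μ ij.1 ij.2)
      (Measure.pi fun i => Measure.pi (μ i)) := by
  refine ⟨MeasurableEquiv.measurable _, ?_⟩
  simpa only [Measure.infinitePi_eq_pi] using Measure.infinitePi_map_curry μ

theorem integral_prod_columns {X 𝕜 : Type*} [MeasurableSpace X] [RCLike 𝕜] (μ : ι → κ → Measure X)
    [∀ i j, IsProbabilityMeasure (μ i j)] (f : κ → (ι → X) → 𝕜) :
    ∫ w : ι → κ → X, ∏ j, f j (fun i => w i j) ∂(Measure.pi fun i => Measure.pi (μ i)) =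
      ∏ j, ∫ y, f j y ∂(Measure.pi fun i => μ i j) := by
  have hflip := ((measurePreserving_curry_pi μ).symm.trans
    (measurePreserving_piCongrLeft (fun ji : κ × ι => μ ji.2 ji.1) (Equiv.prodComm ι κ))).trans
    (measurePreserving_curry_pi fun j i => μ i j)
  rw [← integral_fintype_prod_eq_prod f]
  exact hflip.integral_comp' fun v => ∏ j, f j (v j)

theorem trace_mul_mul_transpose_eq_sum {R : Type*} [CommSemiring R] (M : Matrix ι ι R)
    (U : Matrix ι κ R) : (M * (U * Uᵀ)).trace = ∑ j, U.col j ⬝ᵥ M *ᵥ U.col j := by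
  rw [← Matrix.mul_assoc, trace_mul_comm]
  rfl

theorem integral_exp_trace_maskedMatrix_gaussian [DecidableEq ι] {θ : Matrix ι ι ℝ}
    (hθ : (1 - (2 : ℝ) • θ).PosDef) (P : ι → κ → Prop) [∀ i j, Decidable (P i j)] :
    ∫ w, Real.exp (θ * (maskedMatrix P w * (maskedMatrix P w)ᵀ)).trace
        ∂(Measure.pi fun _ : ι => Measure.pi fun _ : κ => gaussianReal 0 1) =
      ∏ j, (√((1 - (2 : ℝ) • θ).toSquareBlockProp (P · j)).det)⁻¹ := by
  simp_rw [trace_mul_mul_transpose_eq_sum, Real.exp_sum,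
    ← integral_exp_dotProduct_ite_mulVec_ite_gaussian hθ]
  exact integral_prod_columns (fun _ _ => gaussianReal 0 1) fun j y =>
    Real.exp ((fun i => if P i j then y i else 0) ⬝ᵥ θ *ᵥ fun i => if P i j then y i else 0)

end Mask

/- Take determinants in `A * Y = Z`, where `Y` and `Z` are `X` and `1` with their columns outside
`P` replaced by those of `1` and `A`; both are block triangular. -/
theorem det_mul_det_toSquareBlockProp_of_mul_eq_one {m R : Type*} [Fintype m] [DecidableEq m]
    [CommRing R] {A X : Matrix m m R} (hAX : A * X = 1) (P : m → Prop) [DecidablePred P] :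
    A.det * (X.toSquareBlockProp P).det = (A.toSquareBlockProp fun i => ¬ P i).det := by
  set Y : Matrix m m R := of fun i j => if P j then X i j else (1 : Matrix m m R) i j with hY
  set Z : Matrix m m R := of fun i j => if P j then (1 : Matrix m m R) i j else A i j with hZ
  have hAY : A * Y = Z := by
    ext i j
    by_cases hj : P j
    · simp [hY, hZ, hj, ← hAX, Matrix.mul_apply]
    · simp [hY, hZ, hj, Matrix.mul_apply, Matrix.one_apply]
  have hYdet : Y.det = (X.toSquareBlockProp P).det := by
    have hXblock : Y.toSquareBlockProp P = X.toSquareBlockProp P := by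
      ext i j; simp [hY, toSquareBlockProp, j.2]
    have hOneblock : Y.toSquareBlockProp (fun i => ¬ P i) = 1 := by
      ext i j; simp [hY, toSquareBlockProp, j.2, Matrix.one_apply, Subtype.ext_iff]
    rw [twoBlockTriangular_det' Y P fun i hi j hj => ?_, hXblock, hOneblock, det_one, mul_one]
    simp [hY, hj, Matrix.one_apply_ne (ne_of_mem_of_not_mem (s := {i | P i}) hi hj)]
  have hZdet : Z.det = (A.toSquareBlockProp fun i => ¬ P i).det := by
    have hAblock : Z.toSquareBlockProp (fun i => ¬ P i) = A.toSquareBlockProp fun i => ¬ P i := by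
      ext i j; simp [hZ, toSquareBlockProp, j.2]
    have hOneblock : Z.toSquareBlockProp P = 1 := by
      ext i j; simp [hZ, toSquareBlockProp, j.2, Matrix.one_apply, Subtype.ext_iff]
    rw [twoBlockTriangular_det Z P fun i hi j hj => ?_, hAblock, hOneblock, det_one, one_mul]
    simp [hZ, hj, Matrix.one_apply_ne (ne_of_mem_of_not_mem (s := {i | P i}) hj hi).symm]
  rw [← hYdet, ← det_mul, hAY, hZdet]

section GeneralizedPower

variable {r : ℕ} {x : Matrix (Fin r) (Fin r) ℝ}

theorem lpm_eq_det_toSquareBlockProp (x : Matrix (Fin r) (Fin r) ℝ) {k : ℕ} (hk : k ≤ r) :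
    lpm x k hk = (x.toSquareBlockProp fun i => i.val < k).det :=
  det_submatrix_equiv_self (Fin.castLEOrderIso hk).toEquiv (x.toSquareBlockProp fun i => i.val < k)

theorem lpm_zero (x : Matrix (Fin r) (Fin r) ℝ) : lpm x 0 (Nat.zero_le r) = 1 :=
  det_isEmpty

theorem lpm_self (x : Matrix (Fin r) (Fin r) ℝ) : lpm x r le_rfl = x.det :=
  congrArg det (submatrix_id_id x)

theorem lpm_smul (c : ℝ) (x : Matrix (Fin r) (Fin r) ℝ) {k : ℕ} (hk : k ≤ r) :
    lpm (c • x) k hk = c ^ k * lpm x k hk := by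
  rw [lpm, submatrix_smul, Pi.smul_apply, Pi.smul_apply, det_smul, Fintype.card_fin, lpm]

theorem lpm_pos (hx : x.PosDef) {k : ℕ} (hk : k ≤ r) : 0 < lpm x k hk :=
  (hx.submatrix (Fin.castLE_injective hk)).det_pos

theorem lpm_inv {B : Matrix (Fin r) (Fin r) ℝ} (hB : B.PosDef) {k : ℕ} (hk : k ≤ r) :
    lpm B⁻¹ k hk = (B.toSquareBlockProp fun i => k ≤ i.val).det / B.det := by
  have hinv : B * B⁻¹ = 1 := mul_nonsing_inv B hB.det_pos.ne'.isUnit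
  rw [eq_div_iff hB.det_pos.ne', mul_comm, lpm_eq_det_toSquareBlockProp,
    det_mul_det_toSquareBlockProp_of_mul_eq_one hinv]
  exact equiv_block_det _ fun _ => not_lt.symm

theorem genPow_pos (hx : x.PosDef) (s : Fin r → ℝ) : 0 < genPow s x :=
  Finset.prod_pos fun _ _ => Real.rpow_pos_of_pos (lpm_pos hx _) _

theorem genPow_sum (hx : x.PosDef) {κ : Type*} (J : Finset κ) (t : κ → Fin r → ℝ) :
    genPow (∑ j ∈ J, t j) x = ∏ j ∈ J, genPow (t j) x := by
  simp only [genPow]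
  rw [Finset.prod_comm]
  refine Finset.prod_congr rfl fun k _ => ?_
  rw [← Real.rpow_sum_of_pos (lpm_pos hx _)]
  congr 1
  split_ifs <;> simp [Finset.sum_sub_distrib]

theorem genPow_smul {c : ℝ} (hc : 0 < c) (hx : x.PosDef) (s : Fin r → ℝ) :
    genPow s (c • x) = genPow s (c • (1 : Matrix (Fin r) (Fin r) ℝ)) * genPow s x := by
  simp only [genPow]
  rw [← Finset.prod_mul_distrib]
  refine Finset.prod_congr rfl fun k _ => ?_
  have hone : lpm (1 : Matrix (Fin r) (Fin r) ℝ) (k.val + 1) k.isLt = 1 := by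
    rw [lpm, submatrix_one _ (Fin.castLE_injective _), det_one]
  rw [lpm_smul, lpm_smul, hone, mul_one, Real.mul_rpow (by positivity) (lpm_pos hx _).le]

theorem prod_fin_lpm_rpow_ite_succ_eq (x : Matrix (Fin r) (Fin r) ℝ) {k : ℕ} (hk : k ≤ r) (c : ℝ) :
    ∏ i : Fin r, lpm x (i.val + 1) i.isLt ^ (if i.val + 1 = k then c else 0) = lpm x k hk ^ c := by
  obtain _ | m := k
  · simp [lpm_zero]
  · rw [Finset.prod_eq_single (⟨m, hk⟩ : Fin r)]
    · simp
    · rintro i - him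
      simp [Fin.ext_iff.not.mp him]
    · simp

theorem genPow_ite_le (hx : x.PosDef) {k : ℕ} (hk : k ≤ r) (c : ℝ) :
    genPow (fun i => if k ≤ i.val then c else 0) x = (x.det / lpm x k hk) ^ c := by
  have hexponent (i : Fin r) :
      ((if k ≤ i.val then c else 0) -
          if _ : i.val + 1 < r then if k ≤ i.val + 1 then c else 0 else 0) =
        (if i.val + 1 = r then c else 0) + if i.val + 1 = k then -c else 0 := by
    split_ifs <;> first | omega | simp
  rw [genPow]
  simp_rw [hexponent, Real.rpow_add (lpm_pos hx _)]
  rw [Finset.prod_mul_distrib, prod_fin_lpm_rpow_ite_succ_eq x le_rfl,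
    prod_fin_lpm_rpow_ite_succ_eq x hk, lpm_self, Real.div_rpow hx.det_pos.le (lpm_pos hx hk).le,
    Real.rpow_neg (lpm_pos hx hk).le, div_eq_mul_inv]

theorem exists_forall_iff_le_of_monotone {P : Fin r → Prop} (hP : Monotone P) :
    ∃ k ≤ r, ∀ i : Fin r, P i ↔ k ≤ i.val := by
  classical
  have hex : ∃ k, ∀ i : Fin r, k ≤ i.val → P i := ⟨r, fun i hi => absurd i.isLt hi.not_gt⟩
  refine ⟨Nat.find hex, Nat.find_min' hex fun i hi => absurd i.isLt hi.not_gt, fun i => ?_⟩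
  exact ⟨fun hi => Nat.find_min' hex fun _ hij => hP hij hi, Nat.find_spec hex i⟩

theorem genPow_ite_half_inv {B : Matrix (Fin r) (Fin r) ℝ} (hB : B.PosDef) {P : Fin r → Prop}
    [DecidablePred P] (hP : Monotone P) :
    genPow (fun i => if P i then 1 / 2 else 0) B⁻¹ = (√(B.toSquareBlockProp P).det)⁻¹ := by
  obtain ⟨k, hk, hPk⟩ := exists_forall_iff_le_of_monotone hP
  have hratio : B⁻¹.det / lpm B⁻¹ k hk = (B.toSquareBlockProp P).det⁻¹ := by
    rw [lpm_inv hB, det_nonsing_inv, Ring.inverse_eq_inv', equiv_block_det B hPk]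
    have := hB.det_pos.ne'
    field_simp
  simp only [hPk]
  rw [genPow_ite_le hB.inv hk, hratio, ← Real.sqrt_eq_rpow, Real.sqrt_inv]

theorem genPow_natCast_div_two_inv {B : Matrix (Fin r) (Fin r) ℝ} (hB : B.PosDef) {N : ℕ}
    {n : Fin r → ℕ} (hn : Monotone n) (hnN : ∀ i, n i ≤ N) :
    genPow (fun i => (n i : ℝ) / 2) B⁻¹ =
      ∏ j : Fin N, (√(B.toSquareBlockProp fun i => j.val < n i).det)⁻¹ := by
  have hs : (fun i => (n i : ℝ) / 2) =
      ∑ j : Fin N, fun i : Fin r => if j.val < n i then (1 / 2 : ℝ) else 0 := by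
    ext i
    rw [Finset.sum_apply, ← Finset.sum_filter, Finset.sum_const, Fin.card_filter_val_lt,
      min_eq_right (hnN i), nsmul_eq_mul, mul_one_div]
  rw [hs, genPow_sum hB.inv]
  exact Finset.prod_congr rfl fun j _ =>
    genPow_ite_half_inv hB fun _ _ hik hj => hj.trans_le (hn hik)

end GeneralizedPower

theorem stmt_17_general {r N : ℕ} {n : Fin r → ℕ} (hn : Monotone n) (hnN : ∀ i, n i ≤ N)
    {θ : Matrix (Fin r) (Fin r) ℝ}
    (hpos : ((1 / 2 : ℝ) • (1 : Matrix (Fin r) (Fin r) ℝ) - θ).PosDef) :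
    ∫ w, Real.exp (trace (θ * (maskedMatrix (fun i (j : Fin N) => j.val < n i) w *
          (maskedMatrix (fun i (j : Fin N) => j.val < n i) w)ᵀ)))
        ∂(Measure.pi fun _ : Fin r => Measure.pi fun _ : Fin N => gaussianReal 0 1) =
      genPow (fun i => (n i : ℝ) / 2) ((1 / 2 : ℝ) • (1 : Matrix (Fin r) (Fin r) ℝ) - θ)⁻¹ /
        genPow (fun i => (n i : ℝ) / 2) ((2 : ℝ) • (1 : Matrix (Fin r) (Fin r) ℝ)) := by
  set A := (1 / 2 : ℝ) • (1 : Matrix (Fin r) (Fin r) ℝ) - θ with hA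
  have hB : (2 : ℝ) • A = 1 - (2 : ℝ) • θ := by
    rw [hA, smul_sub, smul_smul, mul_one_div_cancel two_ne_zero, one_smul]
  have hBpos : (1 - (2 : ℝ) • θ).PosDef := hB ▸ hpos.smul two_pos
  have hinv : A⁻¹ = (2 : ℝ) • (1 - (2 : ℝ) • θ)⁻¹ := by
    let := invertibleOfNonzero (two_ne_zero' ℝ)
    rw [← hB, inv_smul _ _ hpos.det_pos.ne'.isUnit, smul_smul, mul_invOf_self, one_smul]
  have htwo : ((2 : ℝ) • (1 : Matrix (Fin r) (Fin r) ℝ)).PosDef := PosDef.one.smul two_pos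
  rw [integral_exp_trace_maskedMatrix_gaussian hBpos, hinv, genPow_smul two_pos hBpos.inv,
    mul_div_cancel_left₀ _ (genPow_pos htwo _).ne', genPow_natCast_div_two_inv hBpos hn hnN]

theorem missingDataMatrix_eq_maskedMatrix (p q s₁ s₂ : ℕ) :
    missingDataMatrix p q s₁ s₂ =
      maskedMatrix fun i j => j.val < if i.val < p then s₁ else s₂ := by
  ext w i j
  simp only [missingDataMatrix, maskedMatrix, of_apply]
  grind

theorem monotone_ite_val_lt {m p a b : ℕ} (hab : a ≤ b) :
    Monotone fun i : Fin m => if i.val < p then a else b := by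
  intro i j hij
  grind

theorem stmt_17 (p q s₁ s₂ : ℕ) (hp : 1 ≤ p) (hq : 1 ≤ q) (hs₁ : p ≤ s₁) (hs₂ : s₁ ≤ s₂)
    (θ : Matrix (Fin (p + q)) (Fin (p + q)) ℝ) (hθ : θ.IsSymm)
    (hpos : ((1 / 2 : ℝ) • (1 : Matrix (Fin (p + q)) (Fin (p + q)) ℝ) - θ).PosDef) :
    ∫ w : Fin (p + q) → Fin s₂ → ℝ,
        Real.exp (Matrix.trace (θ *
          (missingDataMatrix p q s₁ s₂ w * (missingDataMatrix p q s₁ s₂ w)ᵀ)))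
        ∂(Measure.pi fun _ : Fin (p + q) => Measure.pi fun _ : Fin s₂ => gaussianReal 0 1) =
      genPow (fun i : Fin (p + q) => if i.val < p then (s₁ : ℝ) / 2 else (s₂ : ℝ) / 2)
          (((1 / 2 : ℝ) • (1 : Matrix (Fin (p + q)) (Fin (p + q)) ℝ) - θ)⁻¹) /
        genPow (fun i : Fin (p + q) => if i.val < p then (s₁ : ℝ) / 2 else (s₂ : ℝ) / 2)
          ((2 : ℝ) • (1 : Matrix (Fin (p + q)) (Fin (p + q)) ℝ)) := by
  simpa only [missingDataMatrix_eq_maskedMatrix, Nat.cast_ite, ite_div] using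
    stmt_17_general (monotone_ite_val_lt hs₂) (fun _ => by split_ifs <;> omega) hpos
end
end
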